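/- Let w, w1, w2 be nonempty words in H^1 and p, q positive integers. Then S(z_p) * S1(z_q)w = S1(z_p z_q)w + S1(z_q)(S(z_p) * w) − S1(z_{p+q})w, and S1(z_p)w1 * S1(z_q)w2 = S1(z_p)(w1 * S1(z_q)w2) + S1(z_q)(S1(z_p)w1 * w2) − S1(z_{p+q})(w1 * w2). -/

import Mathlib

open scoped BigOperators

/-- The two-letter alphabet {x, y}. -/
inductive Letter : Type
  | x : Letter
  | y : Letter
deriving DecidableEq

/-- `H = ℚ⟨x,y⟩`, the noncommutative polynomial ring over ℚ in two
indeterminates, realized as the monoid algebra of the free monoid on `{x,y}`. -/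
abbrev H : Type := MonoidAlgebra ℚ (FreeMonoid Letter)

namespace H

/-- The monomial (word) of `H` corresponding to an element of the free monoid. -/
noncomputable def word (w : FreeMonoid Letter) : H := MonoidAlgebra.single w 1

/-- The generator `x`. -/
noncomputable def X : H := word (FreeMonoid.of Letter.x)

/-- The generator `y`. -/
noncomputable def Y : H := word (FreeMonoid.of Letter.y)

/-- The word `z_k = x^{k-1} y` (for `k ≥ 1`). -/
def zW (k : ℕ) : FreeMonoid Letter :=
  FreeMonoid.ofList (List.replicate (k - 1) Letter.x ++ [Letter.y])

/-- `z_k = x^{k-1} y` as an element of `H`. -/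
noncomputable def z (k : ℕ) : H := word (zW k)

/-- A list `[k₁,…,kₙ]` gives the word `z_{k₁} z_{k₂} ⋯ z_{kₙ}`. -/
def zListW (ks : List ℕ) : FreeMonoid Letter :=
  FreeMonoid.ofList (ks.flatMap fun k => List.replicate (k - 1) Letter.x ++ [Letter.y])

/-- `H¹ = ℚ + Hy` as a ℚ-submodule of `H`. -/
noncomputable def H1 : Submodule ℚ H :=
  LinearMap.range (LinearMap.mulRight ℚ Y) ⊔ Submodule.span ℚ {1}

/-- `H⁰ = ℚ + xHy` as a ℚ-submodule of `H`. -/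
noncomputable def H0 : Submodule ℚ H :=
  LinearMap.range ((LinearMap.mulRight ℚ Y).comp (LinearMap.mulLeft ℚ X)) ⊔
    Submodule.span ℚ {1}

/-- Parse a word of `H¹` into the exponent list of its `z`-decomposition:
`z_{k₁}⋯z_{kₙ} ↦ [k₁,…,kₙ]` (auxiliary accumulator version). -/
def toZAux : List Letter → ℕ → List ℕ
  | [], _ => []
  | Letter.x :: r, n => toZAux r (n + 1)
  | Letter.y :: r, n => (n + 1) :: toZAux r 0

/-- The `z`-decomposition of a word of `H¹`. -/
def toZ (w : FreeMonoid Letter) : List ℕ := toZAux (FreeMonoid.toList w) 0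

/-- The harmonic product on words of `H¹` (via `z`-decompositions):
`1 * w = w * 1 = w` and
`z_k w₁ * z_l w₂ = z_k (w₁ * z_l w₂) + z_l (z_k w₁ * w₂) + z_{k+l} (w₁ * w₂)`. -/
noncomputable def harmW : List ℕ → List ℕ → H
  | [], w => word (zListW w)
  | k :: w1, [] => word (zListW (k :: w1))
  | k :: w1, l :: w2 =>
      z k * harmW w1 (l :: w2) + z l * harmW (k :: w1) w2 + z (k + l) * harmW w1 w2
termination_by w1 w2 => w1.length + w2.length
decreasing_by all_goals simp [Nat.lt_succ_iff] <;> omega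

/-- The n-harmonic product on words of `H¹`:
`1 *̄ w = w *̄ 1 = w` and
`z_k w₁ *̄ z_l w₂ = z_k (w₁ *̄ z_l w₂) + z_l (z_k w₁ *̄ w₂) − z_{k+l} (w₁ *̄ w₂)`. -/
noncomputable def nharmW : List ℕ → List ℕ → H
  | [], w => word (zListW w)
  | k :: w1, [] => word (zListW (k :: w1))
  | k :: w1, l :: w2 =>
      z k * nharmW w1 (l :: w2) + z l * nharmW (k :: w1) w2 - z (k + l) * nharmW w1 w2
termination_by w1 w2 => w1.length + w2.length
decreasing_by all_goals simp [Nat.lt_succ_iff] <;> omega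

/-- The harmonic product `*` on `H¹`, extended ℚ-bilinearly. -/
noncomputable def harm (a b : H) : H :=
  Finsupp.sum a.coeff fun w1 c1 =>
    Finsupp.sum b.coeff fun w2 c2 => (c1 * c2) • harmW (toZ w1) (toZ w2)

/-- The n-harmonic product `*̄` on `H¹`, extended ℚ-bilinearly. -/
noncomputable def nharm (a b : H) : H :=
  Finsupp.sum a.coeff fun w1 c1 =>
    Finsupp.sum b.coeff fun w2 c2 => (c1 * c2) • nharmW (toZ w1) (toZ w2)

/-- The letter exchange `τ(x) = y`, `τ(y) = x`. -/
def τ : Letter → Letter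
  | Letter.x => Letter.y
  | Letter.y => Letter.x

/-- `δ(w) = 1` if `w` is the empty word, `0` otherwise. -/
def δ : List Letter → ℚ
  | [] => 1
  | _ :: _ => 0

/-- The shuffle product on words:
`1 ш w = w ш 1 = w` and `u₁w₁ ш u₂w₂ = u₁(w₁ ш u₂w₂) + u₂(u₁w₁ ш w₂)`. -/
noncomputable def shW : List Letter → List Letter → H
  | [], w => word (FreeMonoid.ofList w)
  | u :: w, [] => word (FreeMonoid.ofList (u :: w))
  | u1 :: w1, u2 :: w2 =>
      word (FreeMonoid.of u1) * shW w1 (u2 :: w2) +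
        word (FreeMonoid.of u2) * shW (u1 :: w1) w2
termination_by w1 w2 => w1.length + w2.length
decreasing_by all_goals simp [Nat.lt_succ_iff]

/-- The n-shuffle product on words: `1 ш̄ w = w ш̄ 1 = w` and
`u₁w₁ ш̄ u₂w₂ = u₁(w₁ ш̄ u₂w₂) + u₂(u₁w₁ ш̄ w₂) − δ(w₁)τ(u₁)u₂w₂ − δ(w₂)τ(u₂)u₁w₁`. -/
noncomputable def nshW : List Letter → List Letter → H
  | [], w => word (FreeMonoid.ofList w)
  | u :: w, [] => word (FreeMonoid.ofList (u :: w))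
  | u1 :: w1, u2 :: w2 =>
      word (FreeMonoid.of u1) * nshW w1 (u2 :: w2) +
        word (FreeMonoid.of u2) * nshW (u1 :: w1) w2 -
        δ w1 • word (FreeMonoid.ofList (τ u1 :: u2 :: w2)) -
        δ w2 • word (FreeMonoid.ofList (τ u2 :: u1 :: w1))
termination_by w1 w2 => w1.length + w2.length
decreasing_by all_goals simp [Nat.lt_succ_iff]

/-- The shuffle product `ш` on `H`, extended ℚ-bilinearly. -/
noncomputable def sh (a b : H) : H :=
  Finsupp.sum a.coeff fun w1 c1 =>
    Finsupp.sum b.coeff fun w2 c2 =>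
      (c1 * c2) • shW (FreeMonoid.toList w1) (FreeMonoid.toList w2)

/-- The n-shuffle product `ш̄` on `H`, extended ℚ-bilinearly. -/
noncomputable def nsh (a b : H) : H :=
  Finsupp.sum a.coeff fun w1 c1 =>
    Finsupp.sum b.coeff fun w2 c2 =>
      (c1 * c2) • nshW (FreeMonoid.toList w1) (FreeMonoid.toList w2)

/-- `S₁`: the ℚ-algebra endomorphism of `H` with `S₁(x) = x`, `S₁(y) = x + y`. -/
noncomputable def S1 : H →ₐ[ℚ] H :=
  MonoidAlgebra.lift ℚ H (FreeMonoid Letter)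
    (FreeMonoid.lift fun u => match u with
      | Letter.x => X
      | Letter.y => X + Y)

/-- `S₂`: the ℚ-algebra endomorphism of `H` with `S₂(x) = x`, `S₂(y) = y − x`. -/
noncomputable def S2 : H →ₐ[ℚ] H :=
  MonoidAlgebra.lift ℚ H (FreeMonoid Letter)
    (FreeMonoid.lift fun u => match u with
      | Letter.x => X
      | Letter.y => Y - X)

/-- `S` on a word: `S(1) = 1` and `S(Fy) = S₁(F)y`. -/
noncomputable def SW (w : FreeMonoid Letter) : H :=
  match (FreeMonoid.toList w).getLast? with
  | some Letter.y =>
      S1 (word (FreeMonoid.ofList (FreeMonoid.toList w).dropLast)) * Y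
  | _ => word w

/-- The ℚ-linear map `S : H¹ → H¹` with `S(1) = 1`, `S(Fy) = S₁(F)y`. -/
noncomputable def S (a : H) : H := Finsupp.sum a.coeff fun w c => c • SW w

/-- `S̃` on a word: `S̃(1) = 1` and `S̃(Fy) = S₂(F)y`. -/
noncomputable def StW (w : FreeMonoid Letter) : H :=
  match (FreeMonoid.toList w).getLast? with
  | some Letter.y =>
      S2 (word (FreeMonoid.ofList (FreeMonoid.toList w).dropLast)) * Y
  | _ => word w

/-- The ℚ-linear map `S̃ : H¹ → H¹` with `S̃(1) = 1`, `S̃(Fy) = S₂(F)y`. -/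
noncomputable def St (a : H) : H := Finsupp.sum a.coeff fun w c => c • StW w

/-- The multiple zeta value `ζ(k₁,…,kₙ)`: the sum over strictly decreasing
tuples `m₁ > m₂ > ⋯ > mₙ > 0` of `1/(m₁^{k₁}⋯mₙ^{kₙ})`. -/
noncomputable def mzeta (ks : List ℕ) : ℝ :=
  ∑' m : {f : Fin ks.length → ℕ // (∀ i, 0 < f i) ∧
      ∀ i j : Fin ks.length, i < j → f j < f i},
    ∏ i : Fin ks.length, ((m.1 i : ℝ) ^ ks.get i)⁻¹

/-- The non-strict multiple zeta value `ζ̄(k₁,…,kₙ)`: the sum over weakly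
decreasing tuples `m₁ ≥ m₂ ≥ ⋯ ≥ mₙ > 0` of `1/(m₁^{k₁}⋯mₙ^{kₙ})`. -/
noncomputable def nmzeta (ks : List ℕ) : ℝ :=
  ∑' m : {f : Fin ks.length → ℕ // (∀ i, 0 < f i) ∧
      ∀ i j : Fin ks.length, i ≤ j → f j ≤ f i},
    ∏ i : Fin ks.length, ((m.1 i : ℝ) ^ ks.get i)⁻¹

/-- The evaluation map `Z : H⁰ → ℝ`, `Z(1) = 1`,
`Z(z_{k₁}⋯z_{kₙ}) = ζ(k₁,…,kₙ)` (extended ℚ-linearly to `H`). -/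
noncomputable def Z (a : H) : ℝ := Finsupp.sum a.coeff fun w c => (c : ℝ) * mzeta (toZ w)

/-- The n-evaluation map `Z̄ : H⁰ → ℝ`, `Z̄(1) = 1`,
`Z̄(z_{k₁}⋯z_{kₙ}) = ζ̄(k₁,…,kₙ)` (extended ℚ-linearly to `H`). -/
noncomputable def Zbar (a : H) : ℝ := Finsupp.sum a.coeff fun w c => (c : ℝ) * nmzeta (toZ w)

/-- `i`-fold n-harmonic power: `a^{*̄ 0} = 1`, `a^{*̄ (i+1)} = a *̄ a^{*̄ i}`. -/
noncomputable def nharmPow : ℕ → H → H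
  | 0, _ => 1
  | i + 1, a => nharm a (nharmPow i a)

/-- `i`-fold n-shuffle power: `a^{ш̄ 0} = 1`, `a^{ш̄ (i+1)} = a ш̄ a^{ш̄ i}`. -/
noncomputable def nshPow : ℕ → H → H
  | 0, _ => 1
  | i + 1, a => nsh a (nshPow i a)

end H

open H

/-!
Since `S₁(z_p) = x^p + z_p`, both identities reduce to the harmonic product of elements of the
form `z_p u` and `x^p u`. The defining recursion handles `z_p u * z_q v`, and because
`x^q z_b = z_{q+b}` it also gives, for `w, w₁, w₂ ∈ Hy`,
`z_p u * x^q w = z_p (u * x^q w) + x^q (z_p u * w) − z_{p+q} (u * w)` and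
`x^p w₁ * x^q w₂ = x^p (w₁ * x^q w₂) + x^q (x^p w₁ * w₂) − x^{p+q} (w₁ * w₂)`.
Taking `u = 1`, the correction terms `± z_{p+q} w` of `z_p * x^q w` and `z_p * z_q w` cancel, and
`x^p S₁(z_q) = S₁(z_{p+q})` gives the first identity. In the second one the correction terms of
the four products add up to
`(z_{p+q} − 2 z_{p+q} − x^{p+q}) (w₁ * w₂) = − S₁(z_{p+q}) (w₁ * w₂)`.
-/

namespace H

open MonoidAlgebra (single)

theorem word_mul (a b : FreeMonoid Letter) : word (a * b) = word a * word b := by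
  simp [word, MonoidAlgebra.single_mul_single]

theorem word_mul_single (a b : FreeMonoid Letter) (c : ℚ) :
    word a * single b c = single (a * b) c := by
  simp [word, MonoidAlgebra.single_mul_single]

theorem word_ofList_replicate_x (n : ℕ) :
    word (FreeMonoid.ofList (List.replicate n Letter.x)) = X ^ n := by
  induction n with
  | zero => rfl
  | succ n ih => rw [List.replicate_succ, FreeMonoid.ofList_cons, word_mul, ih, pow_succ']; rfl

theorem z_eq_X_pow_mul_Y (k : ℕ) : z k = X ^ (k - 1) * Y := by
  rw [z, zW, FreeMonoid.ofList_append, word_mul, word_ofList_replicate_x]; rfl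

theorem z_one : z 1 = Y := by
  rw [z_eq_X_pow_mul_Y, Nat.sub_self, pow_zero, one_mul]

theorem X_pow_mul_z (m : ℕ) {k : ℕ} (hk : 0 < k) : X ^ m * z k = z (m + k) := by
  rw [z_eq_X_pow_mul_Y, z_eq_X_pow_mul_Y, ← mul_assoc, ← pow_add, Nat.add_sub_assoc hk]

theorem X_pow_mul_z_mul (m : ℕ) {k : ℕ} (hk : 0 < k) (u : H) :
    X ^ m * (z k * u) = z (m + k) * u := by
  rw [← mul_assoc, X_pow_mul_z m hk]

theorem S1_X : S1 X = X := by
  simp [S1, X, word]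

theorem S1_Y : S1 Y = X + Y := by
  simp [S1, Y, word]

theorem S1_z {k : ℕ} (hk : 0 < k) : S1 (z k) = X ^ k + z k := by
  rw [z_eq_X_pow_mul_Y, map_mul, map_pow, S1_X, S1_Y, mul_add, ← pow_succ, Nat.sub_add_cancel hk]

theorem S_word (w : FreeMonoid Letter) : S (word w) = SW w := by
  simp [S, word]

theorem S_z (k : ℕ) : S (z k) = z k := by
  rw [z, S_word, ← z, z_eq_X_pow_mul_Y]
  simp [SW, zW, word_ofList_replicate_x, S1_X]

/-- The left ideal `Hy` of `H`, spanned by the nonempty words of `H¹`, as a `ℚ`-submodule: these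
are the elements whose left multiples by powers of `x` stay in `H¹`. -/
noncomputable def Hy : Submodule ℚ H :=
  LinearMap.range (LinearMap.mulRight ℚ Y)

theorem mul_Y_mem_Hy (a : H) : a * Y ∈ Hy :=
  ⟨a, rfl⟩

theorem mul_mem_Hy (a : H) {w : H} (hw : w ∈ Hy) : a * w ∈ Hy := by
  obtain ⟨b, rfl⟩ := hw
  exact ⟨a * b, mul_assoc a b Y⟩

theorem Hy_le_H1 : Hy ≤ H1 :=
  le_sup_left

theorem word_zListW_mem_Hy {ks : List ℕ} (hks : ks ≠ []) : word (zListW ks) ∈ Hy := by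
  obtain ⟨init, k, rfl⟩ := List.eq_nil_or_concat' ks |>.resolve_left hks
  have hsplit : zListW (init ++ [k]) = zListW init * zW k := by
    simp [zListW, zW, FreeMonoid.ofList_append]
  rw [hsplit, word_mul, ← z, z_eq_X_pow_mul_Y]
  exact mul_mem_Hy _ (mul_Y_mem_Hy _)

theorem exists_word_mul_Y_eq_z_mul (w : FreeMonoid Letter) :
    ∃ k > 0, ∃ v : H, word w * Y = z k * v := by
  induction w using FreeMonoid.inductionOn' with
  | one => exact ⟨1, one_pos, 1, by rw [z_one, mul_one]; exact one_mul Y⟩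
  | of_mul letter w ih =>
    rw [word_mul, mul_assoc]
    cases letter with
    | x =>
      obtain ⟨k, hk, v, hv⟩ := ih
      refine ⟨1 + k, by omega, v, ?_⟩
      rw [hv, ← X_pow_mul_z_mul 1 hk, pow_one, X]
    | y => exact ⟨1, one_pos, word w * Y, by rw [z_one, Y]⟩

@[elab_as_elim]
theorem Hy_induction {P : H → Prop} (z_mul : ∀ k > 0, ∀ v, P (z k * v))
    (add : ∀ u v, P u → P v → P (u + v)) {w : H} (hw : w ∈ Hy) : P w := by
  obtain ⟨a, rfl⟩ := hw
  induction a using MonoidAlgebra.induction_linear with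
  | zero => simpa using z_mul 1 one_pos 0
  | add a b ha hb => simpa only [map_add] using add _ _ ha hb
  | single m c =>
    obtain ⟨k, hk, v, hv⟩ := exists_word_mul_Y_eq_z_mul m
    have hsmul : single m c * Y = z k * (c • v) := by
      rw [mul_smul_comm, ← hv, ← smul_mul_assoc, word, MonoidAlgebra.smul_single, smul_eq_mul,
        mul_one]
    simpa only [LinearMap.mulRight_apply, hsmul] using z_mul k hk (c • v)

theorem toZAux_replicate_x_append (m n : ℕ) (r : List Letter) :
    toZAux (List.replicate m Letter.x ++ Letter.y :: r) n = (n + m + 1) :: toZAux r 0 := by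
  induction m generalizing n with
  | zero => rfl
  | succ m ih =>
    rw [List.replicate_succ, List.cons_append, toZAux, ih, Nat.add_right_comm n 1 m, ← add_assoc]

theorem toZ_zW_mul {k : ℕ} (hk : 0 < k) (w : FreeMonoid Letter) :
    toZ (zW k * w) = k :: toZ w := by
  simp [toZ, zW, toZAux_replicate_x_append, Nat.sub_add_cancel hk]

theorem zListW_toZAux_append_y (l : List Letter) (n : ℕ) :
    zListW (toZAux (l ++ [Letter.y]) n) =
      FreeMonoid.ofList (List.replicate n Letter.x ++ l ++ [Letter.y]) := by
  induction l generalizing n with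
  | nil => simp [toZAux, zListW]
  | cons letter l ih =>
    cases letter with
    | x => simp [toZAux, ih, List.replicate_succ']
    | y => simpa [toZAux, zListW] using ih 0

theorem zListW_toZ_mul_y (w : FreeMonoid Letter) :
    zListW (toZ (w * FreeMonoid.of Letter.y)) = w * FreeMonoid.of Letter.y :=
  zListW_toZAux_append_y (FreeMonoid.toList w) 0

theorem harmW_comm (w1 w2 : List ℕ) : harmW w1 w2 = harmW w2 w1 := by
  fun_induction harmW w1 w2 with
  | case1 w => cases w <;> simp [harmW]
  | case2 k w1 => rw [harmW]
  | case3 k w1 l w2 ih1 ih2 ih3 =>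
    rw [harmW, ih1, ih2, ih3, add_comm l k]
    abel

theorem harm_single_single (a b : FreeMonoid Letter) (c d : ℚ) :
    harm (single a c) (single b d) = (c * d) • harmW (toZ a) (toZ b) := by
  simp [harm]

theorem harm_comm (a b : H) : harm a b = harm b a := by
  rw [harm, harm, Finsupp.sum_comm]
  simp only [harmW_comm, mul_comm]

theorem harm_zero_right (a : H) : harm a 0 = 0 := by
  simp [harm]

theorem harm_zero_left (a : H) : harm 0 a = 0 := by
  simp [harm]

theorem harm_add_right (a b c : H) : harm a (b + c) = harm a b + harm a c := by
  simp only [harm, MonoidAlgebra.coeff_add, ← Finsupp.sum_add]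
  congr! with w1 c1
  exact Finsupp.sum_add_index' (by simp) (by simp [mul_add, add_smul])

theorem harm_add_left (a b c : H) : harm (a + b) c = harm a c + harm b c := by
  rw [harm_comm, harm_add_right, harm_comm c a, harm_comm c b]

theorem harm_one_mul_Y (a : H) : harm 1 (a * Y) = a * Y := by
  induction a using MonoidAlgebra.induction_linear with
  | zero => rw [zero_mul, harm_zero_right]
  | add a b ha hb => rw [add_mul, harm_add_right, ha, hb]
  | single m c =>
    have hmonomial : single m c * Y = single (m * FreeMonoid.of Letter.y) c := by
      simp [Y, word, MonoidAlgebra.single_mul_single]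
    rw [hmonomial, MonoidAlgebra.one_def, harm_single_single, one_mul, toZ, FreeMonoid.toList_one,
      toZAux, harmW, zListW_toZ_mul_y, word, MonoidAlgebra.smul_single, smul_eq_mul, mul_one]

theorem harm_one_left {w : H} (hw : w ∈ H1) : harm 1 w = w := by
  obtain ⟨_, ⟨a, rfl⟩, _, hc, rfl⟩ := Submodule.mem_sup.mp hw
  obtain ⟨c, rfl⟩ := Submodule.mem_span_singleton.mp hc
  have hconst : harm 1 (c • 1) = c • (1 : H) := by
    simp [MonoidAlgebra.one_def, harm_single_single, toZ, toZAux, harmW, zListW, word]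
  rw [harm_add_right, hconst, LinearMap.mulRight_apply, harm_one_mul_Y]

-- `toZ` ignores the letters after the last `y`, so the recursion extends from `H¹` to all of `H`.
theorem harm_z_mul_z_mul {k l : ℕ} (hk : 0 < k) (hl : 0 < l) (u v : H) :
    harm (z k * u) (z l * v) =
      z k * harm u (z l * v) + z l * harm (z k * u) v + z (k + l) * harm u v := by
  induction u using MonoidAlgebra.induction_linear with
  | zero => simp only [mul_zero, harm_zero_left, add_zero]
  | add u u' hu hu' =>
    simp only [mul_add, harm_add_left, hu, hu']
    abel
  | single a c =>
    induction v using MonoidAlgebra.induction_linear with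
    | zero => simp only [mul_zero, harm_zero_right, add_zero]
    | add v v' hv hv' =>
      simp only [mul_add, harm_add_right, hv, hv']
      abel
    | single b d =>
      simp only [z, word_mul_single, harm_single_single, toZ_zW_mul, hk, hl, harmW, smul_add,
        mul_smul_comm]

theorem harm_z_mul_X_pow_mul {p : ℕ} (hp : 0 < p) (q : ℕ) (u : H) {w : H} (hw : w ∈ Hy) :
    harm (z p * u) (X ^ q * w) =
      z p * harm u (X ^ q * w) + X ^ q * harm (z p * u) w - z (p + q) * harm u w := by
  refine Hy_induction (fun b hb v ↦ ?_) (fun v w hv hw ↦ ?_) hw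
  · rw [X_pow_mul_z_mul q hb, harm_z_mul_z_mul hp (by omega), harm_z_mul_z_mul hp hb]
    simp only [mul_add, X_pow_mul_z_mul, hp, hb, Nat.add_pos_left, add_comm q p, add_left_comm q p]
    abel
  · simp only [mul_add, harm_add_right, hv, hw]
    abel

theorem harm_X_pow_mul_z_mul (p : ℕ) {q : ℕ} (hq : 0 < q) {w : H} (hw : w ∈ Hy) (v : H) :
    harm (X ^ p * w) (z q * v) =
      X ^ p * harm w (z q * v) + z q * harm (X ^ p * w) v - z (p + q) * harm w v := by
  rw [harm_comm, harm_z_mul_X_pow_mul hq p v hw, harm_comm v, harm_comm (z q * v), harm_comm v,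
    add_comm q p, add_comm (z q * _)]

theorem harm_X_pow_mul_X_pow_mul (p q : ℕ) {w1 w2 : H} (hw1 : w1 ∈ Hy) (hw2 : w2 ∈ Hy) :
    harm (X ^ p * w1) (X ^ q * w2) =
      X ^ p * harm w1 (X ^ q * w2) + X ^ q * harm (X ^ p * w1) w2 -
        X ^ (p + q) * harm w1 w2 := by
  refine Hy_induction (fun a ha u ↦ ?_) (fun u w hu hw ↦ ?_) hw1
  · rw [X_pow_mul_z_mul p ha, harm_z_mul_X_pow_mul (by omega) q u hw2,
      harm_z_mul_X_pow_mul ha q u hw2]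
    simp only [mul_add, mul_sub, X_pow_mul_z_mul, ha, Nat.add_pos_left, pow_add, mul_assoc,
      add_assoc]
    abel
  · simp only [mul_add, harm_add_left, hu, hw]
    abel

end H

theorem lemma_2_5_general {p q : ℕ} (hp : 0 < p) (hq : 0 < q) {w w1 w2 : H}
    (hw : w ∈ Hy) (hw1 : w1 ∈ Hy) (hw2 : w2 ∈ Hy) :
    harm (S (z p)) (S1 (z q) * w) =
      S1 (z p * z q) * w + S1 (z q) * harm (S (z p)) w - S1 (z (p + q)) * w ∧
    harm (S1 (z p) * w1) (S1 (z q) * w2) =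
      S1 (z p) * harm w1 (S1 (z q) * w2) + S1 (z q) * harm (S1 (z p) * w1) w2 -
        S1 (z (p + q)) * harm w1 w2 := by
  rw [map_mul, S_z, S1_z hp, S1_z hq, S1_z (Nat.add_pos_left hp q)]
  simp only [add_mul, harm_add_left, harm_add_right]
  constructor
  · have hXw := harm_z_mul_X_pow_mul hp q 1 hw
    have hzw := harm_z_mul_z_mul hp hq 1 w
    have hone (a : H) : harm 1 (a * w) = a * w := harm_one_left (Hy_le_H1 (mul_mem_Hy a hw))
    rw [mul_one, hone, harm_one_left (Hy_le_H1 hw)] at hXw hzw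
    rw [hXw, hzw, mul_add, mul_add, add_mul, X_pow_mul_z p hq, pow_add]
    simp only [add_mul, mul_assoc]
    abel
  · rw [harm_X_pow_mul_X_pow_mul p q hw1 hw2, harm_X_pow_mul_z_mul p hq hw1,
      harm_z_mul_X_pow_mul hp q w1 hw2, harm_z_mul_z_mul hp hq]
    simp only [mul_add]
    abel

/-- Lemma 2.5: for nonempty words `w = z_{k₁}⋯z_{kₙ}`, `w1`, `w2` of `H¹` and
positive integers `p`, `q`:
`S(z_p) * S₁(z_q)w = S₁(z_p z_q)w + S₁(z_q)(S(z_p) * w) − S₁(z_{p+q})w` and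
`S₁(z_p)w₁ * S₁(z_q)w₂ = S₁(z_p)(w₁ * S₁(z_q)w₂) + S₁(z_q)(S₁(z_p)w₁ * w₂)
  − S₁(z_{p+q})(w₁ * w₂)`. -/
theorem lemma_2_5 (p q : ℕ) (hp : 0 < p) (hq : 0 < q)
    (w w1 w2 : List ℕ) (hw : w ≠ []) (hw1 : w1 ≠ []) (hw2 : w2 ≠ [])
    (hwpos : ∀ a ∈ w, 0 < a) (hw1pos : ∀ a ∈ w1, 0 < a)
    (hw2pos : ∀ a ∈ w2, 0 < a) :
    harm (S (z p)) (S1 (z q) * word (zListW w)) =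
      S1 (z p * z q) * word (zListW w) +
        S1 (z q) * harm (S (z p)) (word (zListW w)) -
        S1 (z (p + q)) * word (zListW w) ∧
    harm (S1 (z p) * word (zListW w1)) (S1 (z q) * word (zListW w2)) =
      S1 (z p) * harm (word (zListW w1)) (S1 (z q) * word (zListW w2)) +
        S1 (z q) * harm (S1 (z p) * word (zListW w1)) (word (zListW w2)) -
        S1 (z (p + q)) * harm (word (zListW w1)) (word (zListW w2)) := by
  exact lemma_2_5_general hp hq (word_zListW_mem_Hy hw) (word_zListW_mem_Hy hw1)
    (word_zListW_mem_Hy hw2)
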